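/- arXiv:1201.1032 — 2 statements merged into one kernel-verified Lean document; each statement's English description precedes it below -/
import Mathlib

section
/- Let C ≠ 0 be a real constant, let L_M : ℝ → ℝ be differentiable, and let q : ℝ → ℝ be twice differentiable. For the naive Lagrangian L(x, v) = (1/2)·L_M(x)·v² − x²/(2C) (magnetic co-energy minus electric energy), the Euler–Lagrange expression along q, d/dt[∂L/∂v(q(t), q̇(t))] − ∂L/∂x(q(t), q̇(t)), equals L_M(q(t))·q̈(t) + (1/2)·L_M'(q(t))·q̇(t)² + q(t)/C for every t. -/
/-- Series loop of a charge-modulated meminductor `L_M(q)` and a linear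
capacitor `C`.  For the naive Lagrangian
`L(x, v) = (1/2) L_M(x) v² - x² / (2C)`, the Euler–Lagrange expression along
the loop charge `q` equals `L_M(q) q̈ + (1/2) L_M'(q) q̇² + q / C`. -/
theorem stmt4 (C : ℝ) (hC : C ≠ 0) (LM q : ℝ → ℝ)
    (hLM : Differentiable ℝ LM)
    (hq : Differentiable ℝ q) (hq' : Differentiable ℝ (deriv q)) :
    ∀ t : ℝ,
      deriv (fun s =>
          deriv (fun v => (1 / 2) * LM (q s) * v ^ 2 - (q s) ^ 2 / (2 * C))
            (deriv q s)) t
        - deriv (fun x => (1 / 2) * LM x * (deriv q t) ^ 2 - x ^ 2 / (2 * C)) (q t)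
      = LM (q t) * deriv (deriv q) t
          + (1 / 2) * deriv LM (q t) * (deriv q t) ^ 2 + q t / C := by
  intro t
  have h1 : (fun s => deriv (fun v => (1 / 2) * LM (q s) * v ^ 2 - (q s) ^ 2 / (2 * C))
      (deriv q s)) = fun s => LM (q s) * deriv q s := by
    funext s
    have h := ((hasDerivAt_pow 2 (deriv q s)).const_mul ((1 / 2) * LM (q s))).sub_const
      ((q s) ^ 2 / (2 * C))
    refine (HasDerivAt.deriv (f' := LM (q s) * deriv q s) ?_)
    convert h using 1
    simp
    ring
  have h2 : HasDerivAt (fun s => LM (q s) * deriv q s)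
      (deriv LM (q t) * deriv q t * deriv q t + LM (q t) * deriv (deriv q) t) t :=
    ((hLM (q t)).hasDerivAt.comp t (hq t).hasDerivAt).mul (hq' t).hasDerivAt
  have h3 : HasDerivAt (fun x => (1 / 2) * LM x * (deriv q t) ^ 2 - x ^ 2 / (2 * C))
      ((1 / 2) * deriv LM (q t) * (deriv q t) ^ 2 - q t / C) (q t) := by
    have h := (((hLM (q t)).hasDerivAt.const_mul (1 / 2)).mul_const ((deriv q t) ^ 2)).sub
      ((hasDerivAt_pow 2 (q t)).div_const (2 * C))
    refine HasDerivAt.congr_deriv h ?_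
    push_cast
    field_simp
    try ring
  rw [h1, h2.deriv, h3.deriv]
  ring
end

section
/- Let C ≠ 0 be a real constant, let L_M : ℝ → ℝ be differentiable, and let q : ℝ → ℝ be twice differentiable. For the Lagrangian L(x, v) = (1/2)·L_M(x)·v² − x²/(2C) and the content function D(x, v) = (1/6)·L_M'(x)·v³, the expression d/dt[∂L/∂v(q(t), q̇(t))] − ∂L/∂x(q(t), q̇(t)) + ∂D/∂v(q(t), q̇(t)) equals L_M(q(t))·q̈(t) + L_M'(q(t))·q̇(t)² + q(t)/C for every t; hence the Lagrange equation with this content function reproduces exactly the true meminductor–capacitor equation of motion. -/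
/-- With the naive Lagrangian `L(x, v) = (1/2) L_M(x) v² - x² / (2C)` and the
content function `D(x, v) = (1/6) L_M'(x) v³`, the Lagrange–Rayleigh
expression along the loop charge `q` equals the true meminductor–capacitor
equation-of-motion expression `L_M(q) q̈ + L_M'(q) q̇² + q / C`. -/
theorem stmt6 (C : ℝ) (hC : C ≠ 0) (LM q : ℝ → ℝ)
    (hLM : Differentiable ℝ LM)
    (hq : Differentiable ℝ q) (hq' : Differentiable ℝ (deriv q)) :
    ∀ t : ℝ,
      deriv (fun s =>
          deriv (fun v => (1 / 2) * LM (q s) * v ^ 2 - (q s) ^ 2 / (2 * C))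
            (deriv q s)) t
        - deriv (fun x => (1 / 2) * LM x * (deriv q t) ^ 2 - x ^ 2 / (2 * C)) (q t)
        + deriv (fun v => (1 / 6) * deriv LM (q t) * v ^ 3) (deriv q t)
      = LM (q t) * deriv (deriv q) t
          + deriv LM (q t) * (deriv q t) ^ 2 + q t / C := by
  intro t
  have h1 : (fun s => deriv (fun v => (1 / 2) * LM (q s) * v ^ 2 - (q s) ^ 2 / (2 * C))
      (deriv q s)) = fun s => LM (q s) * deriv q s := by
    funext s
    have h := (((hasDerivAt_id (deriv q s)).pow 2).const_mul ((1 / 2) * LM (q s))).sub_const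
      ((q s) ^ 2 / (2 * C))
    refine (HasDerivAt.deriv (h.congr_deriv ?_))
    simp
    ring
  have h2 : HasDerivAt (fun s => LM (q s) * deriv q s)
      (deriv LM (q t) * deriv q t * deriv q t + LM (q t) * deriv (deriv q) t) t :=
    ((hLM (q t)).hasDerivAt.comp t (hq t).hasDerivAt).mul (hq' t).hasDerivAt
  have h3 : HasDerivAt (fun x => (1 / 2) * LM x * (deriv q t) ^ 2 - x ^ 2 / (2 * C))
      ((1 / 2) * deriv LM (q t) * (deriv q t) ^ 2 - q t / C) (q t) := by
    have h := (((hLM (q t)).hasDerivAt.const_mul (1 / 2)).mul_const ((deriv q t) ^ 2)).sub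
      (((hasDerivAt_id (q t)).pow 2).div_const (2 * C))
    refine h.congr_deriv ?_
    simp
    field_simp
  have h4 : HasDerivAt (fun v => (1 / 6) * deriv LM (q t) * v ^ 3)
      ((1 / 2) * deriv LM (q t) * (deriv q t) ^ 2) (deriv q t) := by
    have h := ((hasDerivAt_id (deriv q t)).pow 3).const_mul ((1 / 6) * deriv LM (q t))
    refine h.congr_deriv ?_
    simp
    ring
  rw [h1, h2.deriv, h3.deriv, h4.deriv]
  ring
end
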